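/- arXiv:0805.3272 — 5 statements merged into one kernel-verified Lean document; each statement's English description precedes it below -/
import Mathlib

section
/- For every h > 0 the semi-discrete scheme operator T_h is a contraction in the supremum norm with factor e^{-h c₀}: for all bounded Borel functions w, w̃ : ℝ^N → ℝ one has sup_{x∈ℝ^N} |(T_h w)(x) − (T_h w̃)(x)| ≤ e^{-h c₀} · sup_{x∈ℝ^N} |w(x) − w̃(x)|. -/
open MeasureTheory

noncomputable section

abbrev Euc (n : ℕ) : Type := EuclideanSpace ℝ (Fin n)

/-- The semi-discrete scheme operator `T_h` of the semi-Lagrangian scheme. -/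
noncomputable def schemeT {N M d : ℕ} {V : Type*}
    (σ : Euc N → V → Fin d → Euc N) (b : Euc N → V → Euc N)
    (c f : Euc N → V → ℝ) (η : Euc N → V → Euc M → Euc N)
    (ν : Measure (Euc M)) (h : ℝ) (w : Euc N → ℝ) (x : Euc N) : ℝ :=
  ⨅ v : V, h * f x v + Real.exp (-(h * c x v)) *
      ((Real.exp (-(h * (ν Set.univ).toReal)) / (2 * (d : ℝ))) *
        ∑ m : Fin d, (w (x + h • b x v + Real.sqrt h • σ x v m) +
          w (x + h • b x v - Real.sqrt h • σ x v m)) +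
       ((1 - Real.exp (-(h * (ν Set.univ).toReal))) / (ν Set.univ).toReal) *
        ∫ z, w (x + η x v z) ∂ν)

/-- One-control estimate. -/
lemma schemeT_term_le {N M d : ℕ} (hd : 0 < d) {V : Type*}
    (σ : Euc N → V → Fin d → Euc N) (b : Euc N → V → Euc N)
    (c f : Euc N → V → ℝ) (η : Euc N → V → Euc M → Euc N)
    (hηz : ∀ x v, Measurable (η x v))
    (ν : Measure (Euc M)) [IsFiniteMeasure ν]
    (hlam : 0 < (ν Set.univ).toReal)
    (c₀ : ℝ) (hcbd : ∀ x v, c₀ ≤ c x v)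
    (h : ℝ) (hh : 0 < h)
    (w w' : Euc N → ℝ) (hwm : Measurable w) (hw'm : Measurable w')
    (Cw : ℝ) (hw : ∀ x, |w x| ≤ Cw) (hw' : ∀ x, |w' x| ≤ Cw)
    (D : ℝ) (hD : ∀ x, |w x - w' x| ≤ D) (x : Euc N) (v : V) :
    h * f x v + Real.exp (-(h * c x v)) *
      ((Real.exp (-(h * (ν Set.univ).toReal)) / (2 * (d : ℝ))) *
        ∑ m : Fin d, (w (x + h • b x v + Real.sqrt h • σ x v m) +
          w (x + h • b x v - Real.sqrt h • σ x v m)) +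
       ((1 - Real.exp (-(h * (ν Set.univ).toReal))) / (ν Set.univ).toReal) *
        ∫ z, w (x + η x v z) ∂ν) ≤
    (h * f x v + Real.exp (-(h * c x v)) *
      ((Real.exp (-(h * (ν Set.univ).toReal)) / (2 * (d : ℝ))) *
        ∑ m : Fin d, (w' (x + h • b x v + Real.sqrt h • σ x v m) +
          w' (x + h • b x v - Real.sqrt h • σ x v m)) +
       ((1 - Real.exp (-(h * (ν Set.univ).toReal))) / (ν Set.univ).toReal) *
        ∫ z, w' (x + η x v z) ∂ν)) + Real.exp (-(h * c₀)) * D := by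
  have hD0 : 0 ≤ D := (abs_nonneg _).trans (hD 0)
  have hle : ∀ y, w y ≤ w' y + D := fun y => by
    have := (abs_le.1 (hD y)).2
    linarith
  have hint : ∀ u : Euc N → ℝ, Measurable u → (∀ y, |u y| ≤ Cw) →
      Integrable (fun z => u (x + η x v z)) ν := fun u hu hb =>
    Integrable.of_bound
      (hu.comp (measurable_const.add (hηz x v))).aestronglyMeasurable Cw
      (Filter.Eventually.of_forall fun z => hb _)
  have hI : ∫ z, w (x + η x v z) ∂ν ≤
      ∫ z, w' (x + η x v z) ∂ν + (ν Set.univ).toReal * D := by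
    have h1 : ∫ z, w (x + η x v z) ∂ν ≤ ∫ z, (w' (x + η x v z) + D) ∂ν :=
      integral_mono (hint w hwm hw) ((hint w' hw'm hw').add (integrable_const D))
        (fun z => hle _)
    rw [integral_add (hint w' hw'm hw') (integrable_const D), integral_const] at h1
    simpa [Measure.real] using h1
  have hS : ∑ m : Fin d, (w (x + h • b x v + Real.sqrt h • σ x v m) +
          w (x + h • b x v - Real.sqrt h • σ x v m)) ≤
      ∑ m : Fin d, (w' (x + h • b x v + Real.sqrt h • σ x v m) +
          w' (x + h • b x v - Real.sqrt h • σ x v m)) + 2 * d * D := by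
    have : ∑ m : Fin d, (w (x + h • b x v + Real.sqrt h • σ x v m) +
          w (x + h • b x v - Real.sqrt h • σ x v m)) ≤
      ∑ m : Fin d, ((w' (x + h • b x v + Real.sqrt h • σ x v m) +
          w' (x + h • b x v - Real.sqrt h • σ x v m)) + 2 * D) :=
      Finset.sum_le_sum fun m _ => by
        have h1 := hle (x + h • b x v + Real.sqrt h • σ x v m)
        have h2 := hle (x + h • b x v - Real.sqrt h • σ x v m)
        linarith
    refine this.trans_eq ?_
    rw [Finset.sum_add_distrib (g := fun _ => 2 * D)]
    simp only [Finset.sum_const, Finset.card_univ, Fintype.card_fin, nsmul_eq_mul]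
    ring
  generalize (∑ m : Fin d, (w (x + h • b x v + Real.sqrt h • σ x v m) +
          w (x + h • b x v - Real.sqrt h • σ x v m))) = S at *
  generalize (∑ m : Fin d, (w' (x + h • b x v + Real.sqrt h • σ x v m) +
          w' (x + h • b x v - Real.sqrt h • σ x v m))) = S' at *
  generalize (∫ z, w (x + η x v z) ∂ν) = I at *
  generalize (∫ z, w' (x + η x v z) ∂ν) = I' at *
  generalize (ν Set.univ).toReal = l at *
  have hdR : (0 : ℝ) < d := by exact_mod_cast hd
  have he1 : Real.exp (-(h * l)) ≤ 1 := Real.exp_le_one_iff.2 (by nlinarith)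
  have hp : 0 ≤ Real.exp (-(h * l)) / (2 * (d : ℝ)) := by positivity
  have hq : 0 ≤ (1 - Real.exp (-(h * l))) / l := div_nonneg (by linarith) hlam.le
  have k1 := mul_le_mul_of_nonneg_left hS hp
  have k2 := mul_le_mul_of_nonneg_left hI hq
  have e1 : Real.exp (-(h * l)) / (2 * (d : ℝ)) * (S' + 2 * d * D) =
      Real.exp (-(h * l)) / (2 * (d : ℝ)) * S' + Real.exp (-(h * l)) * D := by
    field_simp
  have e2 : (1 - Real.exp (-(h * l))) / l * (I' + l * D) =
      (1 - Real.exp (-(h * l))) / l * I' + (1 - Real.exp (-(h * l))) * D := by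
    field_simp
  rw [e1] at k1
  rw [e2] at k2
  have k3 : Real.exp (-(h * l)) / (2 * (d : ℝ)) * S + (1 - Real.exp (-(h * l))) / l * I ≤
      Real.exp (-(h * l)) / (2 * (d : ℝ)) * S' + (1 - Real.exp (-(h * l))) / l * I' + D := by
    linarith
  have k4 := mul_le_mul_of_nonneg_left k3 (Real.exp_pos (-(h * c x v))).le
  have k5 : Real.exp (-(h * c x v)) * D ≤ Real.exp (-(h * c₀)) * D := by
    refine mul_le_mul_of_nonneg_right (Real.exp_le_exp.2 ?_) hD0
    have := mul_le_mul_of_nonneg_left (hcbd x v) hh.le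
    linarith
  rw [mul_add _ _ D] at k4
  linarith

/-- For every `h > 0` the semi-discrete scheme operator `T_h` is a contraction with
factor `e^{-h c₀}` in the supremum norm on bounded Borel functions. -/
theorem schemeT_contraction
    (N M d : ℕ) (hN : 0 < N) (hM : 0 < M) (hd : 0 < d)
    (V : Type*) [MetricSpace V] [CompactSpace V] [Nonempty V]
    (σ : Euc N → V → Fin d → Euc N) (b : Euc N → V → Euc N)
    (c f : Euc N → V → ℝ) (η : Euc N → V → Euc M → Euc N)
    (hσ : ∀ m : Fin d, Continuous fun p : Euc N × V => σ p.1 p.2 m)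
    (hb : Continuous fun p : Euc N × V => b p.1 p.2)
    (hc : Continuous fun p : Euc N × V => c p.1 p.2)
    (hf : Continuous fun p : Euc N × V => f p.1 p.2)
    (hηxv : ∀ z, Continuous fun p : Euc N × V => η p.1 p.2 z)
    (hηz : ∀ x v, Measurable (η x v))
    (ν : Measure (Euc M)) [IsFiniteMeasure ν] (hν0 : ν {0} = 0)
    (hlam : 0 < (ν Set.univ).toReal)
    (c₀ : ℝ) (hc₀ : 0 < c₀) (hcbd : ∀ x v, c₀ ≤ c x v)
    (h : ℝ) (hh : 0 < h)
    (w w' : Euc N → ℝ) (hwm : Measurable w) (hw'm : Measurable w')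
    (Cw : ℝ) (hw : ∀ x, |w x| ≤ Cw) (hw' : ∀ x, |w' x| ≤ Cw) :
    ∀ x : Euc N, |schemeT σ b c f η ν h w x - schemeT σ b c f η ν h w' x| ≤
      Real.exp (-(h * c₀)) * ⨆ x' : Euc N, |w x' - w' x'| := by
  intro x
  have hC0 : 0 ≤ Cw := (abs_nonneg _).trans (hw 0)
  have hbdd : BddAbove (Set.range fun x' : Euc N => |w x' - w' x'|) := by
    refine ⟨Cw + Cw, ?_⟩
    rintro _ ⟨y, rfl⟩
    exact (abs_sub _ _).trans (add_le_add (hw y) (hw' y))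
  have hD : ∀ y, |w y - w' y| ≤ ⨆ x' : Euc N, |w x' - w' x'| := fun y => le_ciSup hbdd y
  have hD' : ∀ y, |w' y - w y| ≤ ⨆ x' : Euc N, |w x' - w' x'| := fun y => by
    rw [abs_sub_comm]
    exact hD y
  have hfx : Continuous fun v => h * f x v :=
    continuous_const.mul (hf.comp (continuous_const.prodMk continuous_id))
  obtain ⟨L, hL⟩ := (isCompact_range hfx).bddBelow
  have key := @schemeT_term_le N M d hd V σ b c f η hηz ν _ hlam c₀ hcbd h hh
  have hbelow : ∀ u : Euc N → ℝ, Measurable u → (∀ y, |u y| ≤ Cw) →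
      BddBelow (Set.range fun v : V => h * f x v + Real.exp (-(h * c x v)) *
      ((Real.exp (-(h * (ν Set.univ).toReal)) / (2 * (d : ℝ))) *
        ∑ m : Fin d, (u (x + h • b x v + Real.sqrt h • σ x v m) +
          u (x + h • b x v - Real.sqrt h • σ x v m)) +
       ((1 - Real.exp (-(h * (ν Set.univ).toReal))) / (ν Set.univ).toReal) *
        ∫ z, u (x + η x v z) ∂ν)) := by
    intro u hu hub
    refine ⟨L - Real.exp (-(h * c₀)) * Cw, ?_⟩
    rintro _ ⟨v, rfl⟩
    have h1 := key (fun _ => 0) u measurable_const hu Cw (by simpa using hC0) hub Cw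
      (by simpa using hub) x v
    have h2 : L ≤ h * f x v := hL ⟨v, rfl⟩
    simp only [add_zero, Finset.sum_const_zero, mul_zero, integral_zero] at h1
    simp only
    linarith
  have main : ∀ u u' : Euc N → ℝ, Measurable u → Measurable u' → (∀ y, |u y| ≤ Cw) →
      (∀ y, |u' y| ≤ Cw) → (∀ y, |u y - u' y| ≤ ⨆ x' : Euc N, |w x' - w' x'|) →
      schemeT σ b c f η ν h u x - Real.exp (-(h * c₀)) * (⨆ x' : Euc N, |w x' - w' x'|) ≤
        schemeT σ b c f η ν h u' x := by
    intro u u' hu hu' hub hub' hd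
    refine le_ciInf fun v => ?_
    rw [sub_le_iff_le_add]
    exact (ciInf_le (hbelow u hu hub) v).trans (key u u' hu hu' Cw hub hub' _ hd x v)
  have m1 := main w w' hwm hw'm hw hw' hD
  have m2 := main w' w hw'm hwm hw' hw hD'
  rw [abs_le]
  constructor <;> linarith

end
end

section
/- Comparison principle for the semi-discrete scheme: if u, v : ℝ^N → ℝ are bounded Borel functions with u ≤ T_h u pointwise (u is a subsolution) and v ≥ T_h v pointwise (v is a supersolution), then u ≤ v everywhere on ℝ^N. -/
open MeasureTheory

noncomputable section

/-- The averaging part of the scheme. -/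
lemma bracket_mono {N M d : ℕ} (hd : 0 < d) (ν : Measure (Euc M)) [IsFiniteMeasure ν]
    (hlam : 0 < (ν Set.univ).toReal) (h : ℝ) (hh : 0 < h)
    (y : Euc N) (s : Fin d → Euc N) (g : Euc M → Euc N) (hg : Measurable g)
    (w₁ w₂ : Euc N → ℝ) (h₁ : Measurable w₁) (h₂ : Measurable w₂) (C K : ℝ)
    (hb₁ : ∀ x, |w₁ x| ≤ C) (hb₂ : ∀ x, |w₂ x| ≤ C) (hK : ∀ x, w₁ x ≤ w₂ x + K) :
    ((Real.exp (-(h * (ν Set.univ).toReal)) / (2 * (d : ℝ))) *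
        ∑ m : Fin d, (w₁ (y + s m) + w₁ (y - s m)) +
       ((1 - Real.exp (-(h * (ν Set.univ).toReal))) / (ν Set.univ).toReal) *
        ∫ z, w₁ (g z) ∂ν) ≤
    ((Real.exp (-(h * (ν Set.univ).toReal)) / (2 * (d : ℝ))) *
        ∑ m : Fin d, (w₂ (y + s m) + w₂ (y - s m)) +
       ((1 - Real.exp (-(h * (ν Set.univ).toReal))) / (ν Set.univ).toReal) *
        ∫ z, w₂ (g z) ∂ν) + K := by
  have hi : ∀ w : Euc N → ℝ, Measurable w → (∀ x, |w x| ≤ C) →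
      Integrable (fun z => w (g z)) ν := fun w hw hb =>
    Integrable.of_bound (hw.comp hg).aestronglyMeasurable C
      (Filter.Eventually.of_forall fun z => by simpa using hb (g z))
  have hint : ∫ z, w₁ (g z) ∂ν ≤ ∫ z, w₂ (g z) ∂ν + (ν Set.univ).toReal * K := by
    have e : ∫ z, (w₂ (g z) + K) ∂ν = ∫ z, w₂ (g z) ∂ν + (ν Set.univ).toReal * K := by
      rw [integral_add (hi w₂ h₂ hb₂) (integrable_const K)]
      simp [Measure.real]
    rw [← e]
    exact integral_mono (hi w₁ h₁ hb₁) ((hi w₂ h₂ hb₂).add (integrable_const K))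
      fun z => hK (g z)
  have hsum : ∑ m : Fin d, (w₁ (y + s m) + w₁ (y - s m)) ≤
      ∑ m : Fin d, (w₂ (y + s m) + w₂ (y - s m)) + 2 * d * K := by
    have e : ∑ m : Fin d, (w₂ (y + s m) + w₂ (y - s m) + 2 * K) =
        ∑ m : Fin d, (w₂ (y + s m) + w₂ (y - s m)) + 2 * d * K := by
      rw [Finset.sum_add_distrib]; simp; ring
    rw [← e]
    exact Finset.sum_le_sum fun m _ => by
      linarith [hK (y + s m), hK (y - s m)]
  generalize (ν Set.univ).toReal = l at *
  have hp1 : Real.exp (-(h * l)) ≤ 1 := Real.exp_le_one_iff.2 (by nlinarith)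
  have hp0 := Real.exp_pos (-(h * l))
  generalize Real.exp (-(h * l)) = p at *
  have hd' : (0 : ℝ) < d := by exact_mod_cast hd
  have a1 := mul_le_mul_of_nonneg_left hsum (show 0 ≤ p / (2 * (d : ℝ)) by positivity)
  have a2 := mul_le_mul_of_nonneg_left hint
    (show 0 ≤ (1 - p) / l from div_nonneg (by linarith) hlam.le)
  have e1 : p / (2 * (d : ℝ)) * (2 * d * K) = p * K := by field_simp
  have e2 : (1 - p) / l * (l * K) = (1 - p) * K := by field_simp
  rw [mul_add, e1] at a1
  rw [mul_add, e2] at a2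
  linarith

/-- Comparison principle for the semi-discrete scheme: a bounded Borel subsolution
`u ≤ T_h u` is dominated by any bounded Borel supersolution `v ≥ T_h v`. -/
theorem schemeT_comparison
    (N M d : ℕ) (hN : 0 < N) (hM : 0 < M) (hd : 0 < d)
    (V : Type*) [MetricSpace V] [CompactSpace V] [Nonempty V]
    (σ : Euc N → V → Fin d → Euc N) (b : Euc N → V → Euc N)
    (c f : Euc N → V → ℝ) (η : Euc N → V → Euc M → Euc N)
    (hσ : ∀ m : Fin d, Continuous fun p : Euc N × V => σ p.1 p.2 m)
    (hb : Continuous fun p : Euc N × V => b p.1 p.2)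
    (hc : Continuous fun p : Euc N × V => c p.1 p.2)
    (hf : Continuous fun p : Euc N × V => f p.1 p.2)
    (hηxv : ∀ z, Continuous fun p : Euc N × V => η p.1 p.2 z)
    (hηz : ∀ x v, Measurable (η x v))
    (ν : Measure (Euc M)) [IsFiniteMeasure ν] (hν0 : ν {0} = 0)
    (hlam : 0 < (ν Set.univ).toReal)
    (c₀ : ℝ) (hc₀ : 0 < c₀) (hcbd : ∀ x v, c₀ ≤ c x v)
    (h : ℝ) (hh : 0 < h)
    (u v : Euc N → ℝ) (hum : Measurable u) (hvm : Measurable v)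
    (Cu : ℝ) (hub : ∀ x, |u x| ≤ Cu) (hvb : ∀ x, |v x| ≤ Cu)
    (hsub : ∀ x, u x ≤ schemeT σ b c f η ν h u x)
    (hsuper : ∀ x, schemeT σ b c f η ν h v x ≤ v x) :
    ∀ x : Euc N, u x ≤ v x := by
  have hC : 0 ≤ Cu := (abs_nonneg _).trans (hub 0)
  have key : ∀ K : ℝ, 0 ≤ K → (∀ x, u x ≤ v x + K) →
      ∀ x, u x ≤ v x + Real.exp (-(h * c₀)) * K := by
    intro K hK0 hK x
    have hle : u x - Real.exp (-(h * c₀)) * K ≤ schemeT σ b c f η ν h v x := by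
      unfold schemeT
      refine le_ciInf fun a => ?_
      have hbd : BddBelow (Set.range fun v : V => h * f x v + Real.exp (-(h * c x v)) *
          ((Real.exp (-(h * (ν Set.univ).toReal)) / (2 * (d : ℝ))) *
            ∑ m : Fin d, (u (x + h • b x v + Real.sqrt h • σ x v m) +
              u (x + h • b x v - Real.sqrt h • σ x v m)) +
           ((1 - Real.exp (-(h * (ν Set.univ).toReal))) / (ν Set.univ).toReal) *
            ∫ z, u (x + η x v z) ∂ν)) := by
        have hfx : Continuous fun a : V => f x a :=
          hf.comp (Continuous.prodMk_right x)
        obtain ⟨F, hF⟩ := (isCompact_range hfx).bddBelow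
        refine ⟨h * F - Cu, ?_⟩
        rintro _ ⟨a, rfl⟩
        have hFa : F ≤ f x a := hF ⟨a, rfl⟩
        have := bracket_mono hd ν hlam h hh (x + h • b x a) (fun m => Real.sqrt h • σ x a m)
          (fun z => x + η x a z) (measurable_const.add (hηz x a)) (fun _ => 0) u
          measurable_const hum Cu Cu (by simpa using hC) hub
          (fun x => by linarith [neg_abs_le (u x), hub x])
        simp only [add_zero, Finset.sum_const_zero, mul_zero, integral_zero] at this
        have hp1 : Real.exp (-(h * c x a)) ≤ 1 :=
          Real.exp_le_one_iff.2 (by nlinarith [hcbd x a])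
        have hp0 := Real.exp_pos (-(h * c x a))
        have h3 := mul_nonneg hp0.le this
        rw [mul_add] at h3
        have h4 := mul_le_mul_of_nonneg_right hp1 hC
        have h5 := mul_le_mul_of_nonneg_left hFa hh.le
        dsimp only
        linarith
      have h1 := (hsub x).trans (ciInf_le hbd a)
      have h2 := bracket_mono hd ν hlam h hh (x + h • b x a) (fun m => Real.sqrt h • σ x a m)
          (fun z => x + η x a z) (measurable_const.add (hηz x a)) u v
          hum hvm Cu K hub hvb hK
      have hp0 := Real.exp_pos (-(h * c x a))
      have hp1 : Real.exp (-(h * c x a)) ≤ Real.exp (-(h * c₀)) :=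
        Real.exp_le_exp.2 (by nlinarith [hcbd x a])
      have h3 := mul_le_mul_of_nonneg_left h2 hp0.le
      rw [mul_add _ _ K] at h3
      have h4 := mul_le_mul_of_nonneg_right hp1 hK0
      linarith
    linarith [hsuper x]
  have hr1 : Real.exp (-(h * c₀)) < 1 := Real.exp_lt_one_iff.2 (by nlinarith)
  have hr0 := Real.exp_pos (-(h * c₀))
  have iter : ∀ n : ℕ, ∀ x, u x ≤ v x + Real.exp (-(h * c₀)) ^ n * (2 * Cu) := by
    intro n
    induction n with
    | zero =>
      intro x
      linarith [le_abs_self (u x), neg_abs_le (v x), hub x, hvb x,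
        pow_zero (Real.exp (-(h * c₀))), mul_comm (1 : ℝ) (2 * Cu),
        show Real.exp (-(h * c₀)) ^ 0 * (2 * Cu) = 2 * Cu by simp]
    | succ n ih =>
      intro x
      have := key _ (by positivity) ih x
      rwa [← mul_assoc, ← pow_succ'] at this
  intro x
  have ht : Filter.Tendsto (fun n : ℕ => v x + Real.exp (-(h * c₀)) ^ n * (2 * Cu))
      Filter.atTop (nhds (v x)) := by
    simpa using ((tendsto_pow_atTop_nhds_zero_of_lt_one hr0.le hr1).mul_const (2 * Cu)).const_add (v x)
  exact ge_of_tendsto' ht fun n => iter n x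

end
end

section
/- Existence and uniqueness for the semi-discrete scheme: for every h > 0 there exists a unique bounded continuous function u_h : ℝ^N → ℝ satisfying u_h = T_h u_h on all of ℝ^N. -/
open MeasureTheory

noncomputable section

theorem schemeAux_avg {d : ℕ} (hd : 0 < d) (e lam D I : ℝ) (he0 : 0 ≤ e) (he1 : e ≤ 1)
    (hl : 0 < lam) (p : Fin d → ℝ) (hp : ∀ m, |p m| ≤ 2 * D) (hI : |I| ≤ lam * D) :
    |e / (2 * (d : ℝ)) * ∑ m : Fin d, p m + (1 - e) / lam * I| ≤ D := by
  have hd' : (0 : ℝ) < d := by exact_mod_cast hd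
  have h1 : |∑ m : Fin d, p m| ≤ d * (2 * D) := by
    refine (Finset.abs_sum_le_sum_abs _ _).trans ?_
    refine (Finset.sum_le_sum fun m _ => hp m).trans ?_
    simp
  have h2 : |e / (2 * (d : ℝ)) * ∑ m : Fin d, p m| ≤ e * D := by
    rw [abs_mul, abs_of_nonneg (by positivity)]
    refine (mul_le_mul_of_nonneg_left h1 (by positivity)).trans (le_of_eq ?_)
    field_simp
  have h3 : |(1 - e) / lam * I| ≤ (1 - e) * D := by
    have h4 : 0 ≤ (1 - e) / lam := div_nonneg (by linarith) hl.le
    rw [abs_mul, abs_of_nonneg h4]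
    refine (mul_le_mul_of_nonneg_left hI h4).trans (le_of_eq ?_)
    field_simp
  refine (abs_add_le _ _).trans ?_
  linarith

theorem schemeAux_iInf {V : Type*} [Nonempty V] (F G : V → ℝ) (K : ℝ)
    (hF : BddBelow (Set.range F)) (hG : BddBelow (Set.range G))
    (hK : ∀ v, |F v - G v| ≤ K) : |(⨅ v, F v) - ⨅ v, G v| ≤ K := by
  rw [abs_le]
  constructor
  · have : (⨅ v, G v) - K ≤ ⨅ v, F v := by
      refine le_ciInf fun v => ?_
      have := ciInf_le hG v
      have := (abs_le.1 (hK v)).1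
      linarith
    linarith
  · have : (⨅ v, F v) - K ≤ ⨅ v, G v := by
      refine le_ciInf fun v => ?_
      have := ciInf_le hF v
      have := (abs_le.1 (hK v)).2
      linarith
    linarith

theorem schemeAux_int {α : Type*} [MeasurableSpace α] (ν : Measure α) [IsFiniteMeasure ν]
    (g : α → ℝ) (D : ℝ) (hg : ∀ z, |g z| ≤ D) :
    |∫ z, g z ∂ν| ≤ (ν Set.univ).toReal * D := by
  have := norm_integral_le_of_norm_le_const (μ := ν) (f := g) (C := D)
    (Filter.Eventually.of_forall hg)
  rw [mul_comm]
  simpa [Measure.real] using this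

set_option maxHeartbeats 800000 in
/-- Existence and uniqueness for the semi-discrete scheme: for every `h > 0` there is a
unique bounded continuous function `u` with `u = T_h u` on all of `ℝ^N`. -/
theorem schemeT_exists_unique
    (N M d : ℕ) (hN : 0 < N) (hM : 0 < M) (hd : 0 < d)
    (V : Type*) [MetricSpace V] [CompactSpace V] [Nonempty V]
    (σ : Euc N → V → Fin d → Euc N) (b : Euc N → V → Euc N)
    (c f : Euc N → V → ℝ) (η : Euc N → V → Euc M → Euc N)
    (hσ : ∀ m : Fin d, Continuous fun p : Euc N × V => σ p.1 p.2 m)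
    (hb : Continuous fun p : Euc N × V => b p.1 p.2)
    (hc : Continuous fun p : Euc N × V => c p.1 p.2)
    (hf : Continuous fun p : Euc N × V => f p.1 p.2)
    (hηxv : ∀ z, Continuous fun p : Euc N × V => η p.1 p.2 z)
    (hηz : ∀ x v, Measurable (η x v))
    (L₁ L₂ ℓ : ℝ) (hL₁ : 0 ≤ L₁) (hL₂ : 0 ≤ L₂) (hℓ : 0 ≤ ℓ)
    (hfbd : ∀ x v, |f x v| ≤ L₁)
    (hflip : ∀ v, LipschitzWith (Real.toNNReal L₁) fun x => f x v)
    (hcb : ∀ x v, |c x v| ≤ L₁)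
    (hclip : ∀ v, LipschitzWith (Real.toNNReal L₁) fun x => c x v)
    (hbb : ∀ x v, ‖b x v‖ ≤ L₂)
    (hblip : ∀ v, LipschitzWith (Real.toNNReal L₂) fun x => b x v)
    (hσb : ∀ x v (m : Fin d), ‖σ x v m‖ ≤ L₂)
    (hσlip : ∀ v (m : Fin d), LipschitzWith (Real.toNNReal L₂) fun x => σ x v m)
    (hηb : ∀ x v (z : Euc M),
      ‖η x v z‖ ≤ L₂ * (if ‖z‖ < 1 then ‖z‖ else Real.exp (ℓ * ‖z‖)))
    (hηlip : ∀ v (z : Euc M),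
      LipschitzWith (Real.toNNReal (L₂ * (if ‖z‖ < 1 then ‖z‖ else Real.exp (ℓ * ‖z‖))))
        fun x => η x v z)
    (ν : Measure (Euc M)) [IsFiniteMeasure ν] (hν0 : ν {0} = 0)
    (hlam : 0 < (ν Set.univ).toReal)
    (hνexp : Integrable (fun z : Euc M => Real.exp (ℓ * ‖z‖)) ν)
    (c₀ : ℝ) (hc₀ : 0 < c₀) (hcbd : ∀ x v, c₀ ≤ c x v)
    (h : ℝ) (hh : 0 < h) :
    ∃! u : Euc N → ℝ,
      (Continuous u ∧ ∃ C, ∀ x, |u x| ≤ C) ∧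
        ∀ x, u x = schemeT σ b c f η ν h u x := by
  set lam := (ν Set.univ).toReal with hlamdef
  set e := Real.exp (-(h * lam)) with hedef
  have he0 : 0 ≤ e := (Real.exp_pos _).le
  have he1 : e ≤ 1 := Real.exp_le_one_iff.2 (by have := mul_pos hh hlam; linarith)
  let A : (Euc N → ℝ) → Euc N → V → ℝ := fun w x v =>
    e / (2 * (d : ℝ)) *
        ∑ m : Fin d, (w (x + h • b x v + Real.sqrt h • σ x v m) +
          w (x + h • b x v - Real.sqrt h • σ x v m)) +
       (1 - e) / lam * ∫ z, w (x + η x v z) ∂ν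
  let G : (Euc N → ℝ) → Euc N → V → ℝ := fun w x v =>
    h * f x v + Real.exp (-(h * c x v)) * A w x v
  have hT : ∀ w x, schemeT σ b c f η ν h w x = ⨅ v, G w x v := fun w x => rfl
  set q := Real.exp (-(h * c₀)) with hq
  have hq0 : 0 ≤ q := (Real.exp_pos _).le
  have hq1 : q < 1 := Real.exp_lt_one_iff.2 (by have := mul_pos hh hc₀; linarith)
  have hcq : ∀ x v, Real.exp (-(h * c x v)) ≤ q := fun x v =>
    Real.exp_le_exp.2 (by have := mul_le_mul_of_nonneg_left (hcbd x v) hh.le; linarith)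
  -- bounds
  have hA : ∀ w D, (∀ x, |w x| ≤ D) → ∀ x v, |A w x v| ≤ D := by
    intro w D hw x v
    refine schemeAux_avg hd e lam D _ he0 he1 hlam _ (fun m => ?_) ?_
    · refine (abs_add_le _ _).trans ?_
      linarith [hw (x + h • b x v + Real.sqrt h • σ x v m),
        hw (x + h • b x v - Real.sqrt h • σ x v m)]
    · exact schemeAux_int ν _ D fun z => hw _
  have hint : ∀ w : BoundedContinuousFunction (Euc N) ℝ, ∀ x v,
      Integrable (fun z => w (x + η x v z)) ν := by
    intro w x v
    refine Integrable.of_bound (C := ‖w‖) ?_ (Filter.Eventually.of_forall fun z =>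
      w.norm_coe_le_norm _)
    have hm : Measurable fun z => x + η x v z := (hηz x v).const_add x
    exact (w.continuous.measurable.comp hm).aestronglyMeasurable
  have hAsub : ∀ w w' : BoundedContinuousFunction (Euc N) ℝ, ∀ x v,
      A w x v - A w' x v = A (fun y => w y - w' y) x v := by
    intro w w' x v
    simp only [A]
    rw [integral_sub (hint w x v) (hint w' x v)]
    have : ∑ m : Fin d, ((w (x + h • b x v + Real.sqrt h • σ x v m) -
            w' (x + h • b x v + Real.sqrt h • σ x v m)) +
          (w (x + h • b x v - Real.sqrt h • σ x v m) -
            w' (x + h • b x v - Real.sqrt h • σ x v m))) =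
        ∑ m : Fin d, (w (x + h • b x v + Real.sqrt h • σ x v m) +
          w (x + h • b x v - Real.sqrt h • σ x v m)) -
        ∑ m : Fin d, (w' (x + h • b x v + Real.sqrt h • σ x v m) +
          w' (x + h • b x v - Real.sqrt h • σ x v m)) := by
      rw [← Finset.sum_sub_distrib]
      exact Finset.sum_congr rfl fun m _ => by ring
    rw [this]
    ring
  have hGb : ∀ w : BoundedContinuousFunction (Euc N) ℝ, ∀ x v,
      |G w x v| ≤ h * L₁ + q * ‖w‖ := by
    intro w x v
    refine (abs_add_le _ _).trans ?_
    rw [abs_mul, abs_mul, abs_of_pos hh, abs_of_pos (Real.exp_pos _)]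
    exact add_le_add (mul_le_mul_of_nonneg_left (hfbd x v) hh.le)
      (mul_le_mul (hcq x v) (hA w ‖w‖ (fun y => w.norm_coe_le_norm y) x v)
        (abs_nonneg _) hq0)
  have hGbdd : ∀ w : BoundedContinuousFunction (Euc N) ℝ, ∀ x,
      BddBelow (Set.range (G w x)) := by
    intro w x
    refine ⟨-(h * L₁ + q * ‖w‖), ?_⟩
    rintro _ ⟨v, rfl⟩
    exact (abs_le.1 (hGb w x v)).1
  have hGsub : ∀ w w' : BoundedContinuousFunction (Euc N) ℝ, ∀ x v,
      |G w x v - G w' x v| ≤ q * dist w w' := by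
    intro w w' x v
    have h1 : G w x v - G w' x v =
        Real.exp (-(h * c x v)) * A (fun y => w y - w' y) x v := by
      rw [← hAsub]
      simp only [G]
      ring
    rw [h1, abs_mul, abs_of_pos (Real.exp_pos _)]
    have h2 : ∀ y, |w y - w' y| ≤ dist w w' := fun y => by
      rw [← Real.dist_eq]
      exact BoundedContinuousFunction.dist_coe_le_dist y
    have h3 := hA (fun y => w y - w' y) (dist w w') h2 x v
    exact mul_le_mul (hcq x v) h3 (abs_nonneg _) hq0
  have hGcont : ∀ w : BoundedContinuousFunction (Euc N) ℝ,
      Continuous fun p : Euc N × V => G w p.1 p.2 := by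
    intro w
    have hI : Continuous fun p : Euc N × V => ∫ z, w (p.1 + η p.1 p.2 z) ∂ν := by
      refine continuous_of_dominated (bound := fun _ => ‖w‖)
        (fun p => (hint w p.1 p.2).aestronglyMeasurable)
        (fun p => Filter.Eventually.of_forall fun z => w.norm_coe_le_norm _)
        (integrable_const _) (Filter.Eventually.of_forall fun z => ?_)
      exact w.continuous.comp (continuous_fst.add (hηxv z))
    have hS : Continuous fun p : Euc N × V =>
        ∑ m : Fin d, (w (p.1 + h • b p.1 p.2 + Real.sqrt h • σ p.1 p.2 m) +
          w (p.1 + h • b p.1 p.2 - Real.sqrt h • σ p.1 p.2 m)) := by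
      refine continuous_finsetSum _ fun m _ => ?_
      have hbase := continuous_fst.add (hb.const_smul h)
      have hs := (hσ m).const_smul (Real.sqrt h)
      exact (w.continuous.comp (hbase.add hs)).add (w.continuous.comp (hbase.sub hs))
    exact (hf.const_mul h).add ((Real.continuous_exp.comp (hc.const_mul h).neg).mul
      ((hS.const_mul _).add (hI.const_mul _)))
  have hTcont : ∀ w : BoundedContinuousFunction (Euc N) ℝ,
      Continuous fun x => ⨅ v, G w x v := by
    intro w
    have := IsCompact.continuous_sInf (f := G w) (isCompact_univ (X := V)) (hGcont w)
    simp only [Set.image_univ] at this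
    exact this
  have hTb : ∀ w : BoundedContinuousFunction (Euc N) ℝ, ∀ x,
      ‖⨅ v, G w x v‖ ≤ h * L₁ + q * ‖w‖ := by
    intro w x
    rw [Real.norm_eq_abs, abs_le]
    refine ⟨le_ciInf fun v => (abs_le.1 (hGb w x v)).1, ?_⟩
    obtain ⟨v⟩ := ‹Nonempty V›
    exact (ciInf_le (hGbdd w x) v).trans (abs_le.1 (hGb w x v)).2
  let Φ : BoundedContinuousFunction (Euc N) ℝ → BoundedContinuousFunction (Euc N) ℝ :=
    fun w => BoundedContinuousFunction.ofNormedAddCommGroup (fun x => ⨅ v, G w x v)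
      (hTcont w) _ (hTb w)
  have hΦ : ContractingWith ⟨q, hq0⟩ Φ := by
    refine ⟨by exact_mod_cast hq1, LipschitzWith.of_dist_le_mul fun w w' => ?_⟩
    refine (BoundedContinuousFunction.dist_le (mul_nonneg hq0 dist_nonneg)).2 fun x => ?_
    rw [Real.dist_eq]
    exact schemeAux_iInf _ _ _ (hGbdd w x) (hGbdd w' x) (hGsub w w' x)
  let u := ContractingWith.fixedPoint Φ hΦ
  have hu : Φ u = u := hΦ.fixedPoint_isFixedPt
  refine ⟨u, ⟨⟨u.continuous, ‖u‖, fun x => u.norm_coe_le_norm x⟩, fun x => ?_⟩, ?_⟩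
  · rw [hT]
    exact (DFunLike.congr_fun hu x).symm
  · rintro y ⟨⟨hyc, C, hyC⟩, hy⟩
    let y' := BoundedContinuousFunction.ofNormedAddCommGroup y hyc C hyC
    have hy' : Φ y' = y' := by
      ext x
      exact (hy x).symm
    have : y' = u := hΦ.fixedPoint_unique hy'
    funext x
    exact DFunLike.congr_fun this x

end
end

section
/- Convexity (condition (C4) with C = 0) of the semi-discrete scheme: for every h > 0, every x ∈ ℝ^N, every bounded Lipschitz function φ : ℝ^N → ℝ, and every mollifier ρ (a nonnegative integrable function on ℝ^N with ∫ρ = 1), one has ∫_{ℝ^N} S(h, x, φ(x−e), φ(· − e)) ρ(e) de ≥ S(h, x, (φ*ρ)(x), φ*ρ), where φ*ρ denotes convolution. -/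
open MeasureTheory

noncomputable section

/-- The abstract form `S(h,x,r,ψ)` of the semi-discrete scheme. -/
noncomputable def schemeS {N M d : ℕ} {V : Type*}
    (σ : Euc N → V → Fin d → Euc N) (b : Euc N → V → Euc N)
    (c f : Euc N → V → ℝ) (η : Euc N → V → Euc M → Euc N)
    (ν : Measure (Euc M)) (h : ℝ) (x : Euc N) (r : ℝ) (ψ : Euc N → ℝ) : ℝ :=
  ⨆ v : V,
    (-(Real.exp (-(h * (ν Set.univ).toReal)) / (2 * (d : ℝ) * h)) *
        ∑ m : Fin d, (ψ (x + h • b x v + Real.sqrt h • σ x v m) - 2 * r +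
          ψ (x + h • b x v - Real.sqrt h • σ x v m)) -
      ((1 - Real.exp (-(h * (ν Set.univ).toReal))) / (h * (ν Set.univ).toReal)) *
        (∫ z, (ψ (x + η x v z) - r) ∂ν) +
      ((Real.exp (h * c x v) - 1) / h) * r - Real.exp (h * c x v) * f x v)

/-- The expression inside the supremum. -/
noncomputable def schemeG {N M d : ℕ} {V : Type*}
    (σ : Euc N → V → Fin d → Euc N) (b : Euc N → V → Euc N)
    (c f : Euc N → V → ℝ) (η : Euc N → V → Euc M → Euc N)
    (ν : Measure (Euc M)) (h : ℝ) (x : Euc N) (r : ℝ) (ψ : Euc N → ℝ) (v : V) : ℝ :=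
    (-(Real.exp (-(h * (ν Set.univ).toReal)) / (2 * (d : ℝ) * h)) *
        ∑ m : Fin d, (ψ (x + h • b x v + Real.sqrt h • σ x v m) - 2 * r +
          ψ (x + h • b x v - Real.sqrt h • σ x v m)) -
      ((1 - Real.exp (-(h * (ν Set.univ).toReal))) / (h * (ν Set.univ).toReal)) *
        (∫ z, (ψ (x + η x v z) - r) ∂ν) +
      ((Real.exp (h * c x v) - 1) / h) * r - Real.exp (h * c x v) * f x v)

theorem schemeG_diff {N M d : ℕ} {V : Type*}
    (σ : Euc N → V → Fin d → Euc N) (b : Euc N → V → Euc N)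
    (c f : Euc N → V → ℝ) (η : Euc N → V → Euc M → Euc N)
    (hηz : ∀ x v, Measurable (η x v))
    (Cb : ℝ) (hcbd : ∀ x v, |c x v| ≤ Cb)
    (ν : Measure (Euc M)) [IsFiniteMeasure ν]
    (h : ℝ) (hh : 0 < h) (x : Euc N) : ∃ K : ℝ, 0 ≤ K ∧ ∀ (v : V) (r r' δ B : ℝ) (ψ ψ' : Euc N → ℝ),
      Continuous ψ → Continuous ψ' → (∀ y, |ψ y| ≤ B) → (∀ y, |ψ' y| ≤ B) →
      |r - r'| ≤ δ → (∀ y, |ψ y - ψ' y| ≤ δ) →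
      |schemeG σ b c f η ν h x r ψ v - schemeG σ b c f η ν h x r' ψ' v| ≤ K * δ := by
  set A := (Real.exp (-(h * (ν Set.univ).toReal)) / (2 * (d : ℝ) * h)) with hA
  set B0 := ((1 - Real.exp (-(h * (ν Set.univ).toReal))) / (h * (ν Set.univ).toReal)) with hB0
  refine ⟨|A| * (d * 4) + |B0| * (2 * ν.real Set.univ) + (Real.exp (h * Cb) + 1) / h,
    by positivity, ?_⟩
  intro v r r' δ B ψ ψ' hψ hψ' hψb hψb' hr hd
  have hδ : 0 ≤ δ := (abs_nonneg _).trans hr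
  have hI : ∀ (χ : Euc N → ℝ) (s : ℝ), Continuous χ → (∀ y, |χ y| ≤ B) →
      Integrable (fun z => χ (x + η x v z) - s) ν := by
    intro χ s h1 h2
    refine Integrable.sub (Integrable.of_bound (C := B) ?_ ?_) (integrable_const _)
    · exact (h1.measurable.comp ((hηz x v).const_add x)).aestronglyMeasurable
    · exact Filter.Eventually.of_forall fun z => h2 _
  have e1 : |∑ m : Fin d, ((ψ (x + h • b x v + Real.sqrt h • σ x v m) - 2 * r +
          ψ (x + h • b x v - Real.sqrt h • σ x v m)) -
          (ψ' (x + h • b x v + Real.sqrt h • σ x v m) - 2 * r' +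
          ψ' (x + h • b x v - Real.sqrt h • σ x v m)))| ≤ d * 4 * δ := by
    refine (Finset.abs_sum_le_sum_abs _ _).trans ?_
    refine (Finset.sum_le_card_nsmul _ _ (4 * δ) ?_).trans ?_
    · intro m _
      have h1 := abs_le.1 (hd (x + h • b x v + Real.sqrt h • σ x v m))
      have h2 := abs_le.1 (hd (x + h • b x v - Real.sqrt h • σ x v m))
      have h3 := abs_le.1 hr
      rw [abs_le]; constructor <;> linarith [h1.1, h1.2, h2.1, h2.2, h3.1, h3.2]
    · simp [mul_assoc]
  have e2 : |∫ z, ((ψ (x + η x v z) - r) - (ψ' (x + η x v z) - r')) ∂ν|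
      ≤ 2 * ν.real Set.univ * δ := by
    have := norm_integral_le_of_norm_le_const (μ := ν) (C := 2 * δ)
      (f := fun z => ((ψ (x + η x v z) - r) - (ψ' (x + η x v z) - r'))) (by
        refine Filter.Eventually.of_forall fun z => ?_
        have h1 := abs_le.1 (hd (x + η x v z))
        have h3 := abs_le.1 hr
        rw [Real.norm_eq_abs, abs_le]; constructor <;> linarith [h1.1, h1.2, h3.1, h3.2])
    rw [Real.norm_eq_abs] at this
    linarith
  have e3 : |(Real.exp (h * c x v) - 1) / h| ≤ (Real.exp (h * Cb) + 1) / h := by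
    rw [abs_div, abs_of_pos hh]
    gcongr
    have h1 : Real.exp (h * c x v) ≤ Real.exp (h * Cb) := by
      gcongr
      exact (abs_le.1 (hcbd x v)).2
    have h2 := Real.exp_pos (h * c x v)
    rw [abs_le]; constructor <;> linarith
  rw [integral_sub (hI _ _ hψ hψb) (hI _ _ hψ' hψb')] at e2
  rw [Finset.sum_sub_distrib] at e1
  have key : schemeG σ b c f η ν h x r ψ v - schemeG σ b c f η ν h x r' ψ' v =
      -(A * (∑ m : Fin d, (ψ (x + h • b x v + Real.sqrt h • σ x v m) - 2 * r +
          ψ (x + h • b x v - Real.sqrt h • σ x v m)) -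
          ∑ m : Fin d, (ψ' (x + h • b x v + Real.sqrt h • σ x v m) - 2 * r' +
          ψ' (x + h • b x v - Real.sqrt h • σ x v m)))) -
      B0 * (∫ z, (ψ (x + η x v z) - r) ∂ν - ∫ z, (ψ' (x + η x v z) - r') ∂ν) +
      ((Real.exp (h * c x v) - 1) / h) * (r - r') := by
    unfold schemeG
    rw [← hA, ← hB0]
    ring
  rw [key]
  refine (abs_add_le _ _).trans ?_
  refine (add_le_add_left (abs_sub _ _) _).trans ?_
  rw [abs_neg, abs_mul, abs_mul, abs_mul]
  have m1 := mul_le_mul_of_nonneg_left e1 (abs_nonneg A)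
  have m2 := mul_le_mul_of_nonneg_left e2 (abs_nonneg B0)
  have m3 := mul_le_mul e3 hr (abs_nonneg _) (by positivity)
  linarith

theorem integral_comb4 {α : Type*} [MeasurableSpace α] {μ : Measure α} (a b c d : ℝ)
    {g1 g2 g3 g4 : α → ℝ} (h1 : Integrable g1 μ) (h2 : Integrable g2 μ)
    (h3 : Integrable g3 μ) (h4 : Integrable g4 μ) :
    ∫ e, (a * g1 e - b * g2 e + c * g3 e - d * g4 e) ∂μ =
      a * (∫ e, g1 e ∂μ) - b * (∫ e, g2 e ∂μ) + c * (∫ e, g3 e ∂μ) - d * ∫ e, g4 e ∂μ := by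
  have k1 : Integrable (fun e => a * g1 e) μ := h1.const_mul a
  have k2 : Integrable (fun e => b * g2 e) μ := h2.const_mul b
  have k3 : Integrable (fun e => c * g3 e) μ := h3.const_mul c
  have k4 : Integrable (fun e => d * g4 e) μ := h4.const_mul d
  have k12 : Integrable (fun e => a * g1 e - b * g2 e) μ := k1.sub k2
  have k123 : Integrable (fun e => a * g1 e - b * g2 e + c * g3 e) μ := k12.add k3
  rw [integral_sub k123 k4, integral_add k12 k3, integral_sub k1 k2]
  simp only [integral_const_mul]

theorem schemeG_avg {N M d : ℕ} {V : Type*}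
    (σ : Euc N → V → Fin d → Euc N) (b : Euc N → V → Euc N)
    (c f : Euc N → V → ℝ) (η : Euc N → V → Euc M → Euc N)
    (hηz : ∀ x v, Measurable (η x v))
    (ν : Measure (Euc M)) [IsFiniteMeasure ν]
    (h : ℝ) (x : Euc N) (v : V)
    (φ : Euc N → ℝ) (Bφ : ℝ) (hφb : ∀ y, |φ y| ≤ Bφ) (hφ : Continuous φ)
    (ρ : Euc N → ℝ) (hρint : Integrable ρ volume) (hρ1 : (∫ e, ρ e) = 1) :
    schemeG σ b c f η ν h x (∫ e, φ (x - e) * ρ e) (fun y => ∫ e, φ (y - e) * ρ e) v =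
     ∫ e, schemeG σ b c f η ν h x (φ (x - e)) (fun y => φ (y - e)) v * ρ e := by
  have hint : ∀ y, Integrable (fun e => φ (y - e) * ρ e) volume := fun y =>
    hρint.bdd_mul (c := Bφ) (by fun_prop) (Filter.Eventually.of_forall fun e => hφb _)
  have hprod : Integrable (Function.uncurry fun (z : Euc M) (e : Euc N) =>
      (φ (x + η x v z - e) - φ (x - e)) * ρ e) (ν.prod volume) := by
    refine (hρint.comp_snd ν).bdd_mul (c := Bφ + Bφ) ?_ (Filter.Eventually.of_forall fun p => ?_)
    · have := hηz x v
      have := hφ.measurable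
      exact Measurable.aestronglyMeasurable (by fun_prop)
    · exact (norm_sub_le _ _).trans (add_le_add (hφb _) (hφb _))
  have hswap := integral_integral_swap hprod
  have hI : Integrable (fun e => (∫ z, (φ (x + η x v z - e) - φ (x - e)) ∂ν) * ρ e) volume := by
    have := hprod.integral_prod_right
    simpa [Function.uncurry, integral_mul_const] using this
  have hν : ∫ z, ((∫ e, φ (x + η x v z - e) * ρ e) - ∫ e, φ (x - e) * ρ e) ∂ν =
      ∫ e, (∫ z, (φ (x + η x v z - e) - φ (x - e)) ∂ν) * ρ e := by
    rw [← (funext fun e => integral_mul_const (ρ e) _ :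
      (fun e => ∫ z, (φ (x + η x v z - e) - φ (x - e)) * ρ e ∂ν) = _), ← hswap]
    congr 1; ext z
    rw [← integral_sub (hint _) (hint _)]
    congr 1; ext e; ring
  unfold schemeG
  set A := (Real.exp (-(h * (ν Set.univ).toReal)) / (2 * (d : ℝ) * h)) with hA
  set B0 := ((1 - Real.exp (-(h * (ν Set.univ).toReal))) / (h * (ν Set.univ).toReal)) with hB0
  set C0 := (Real.exp (h * c x v) - 1) / h
  set D0 := Real.exp (h * c x v) * f x v
  have hm : ∀ m : Fin d, Integrable (fun e => φ (x + h • b x v + Real.sqrt h • σ x v m - e) * ρ e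
      - 2 * (φ (x - e) * ρ e) + φ (x + h • b x v - Real.sqrt h • σ x v m - e) * ρ e) volume :=
    fun m => ((hint _).sub ((hint _).const_mul _)).add (hint _)
  have hs := integrable_finsetSum Finset.univ (fun m _ => hm m)
  have hfun : ∀ e, (-A * ∑ m : Fin d, (φ (x + h • b x v + Real.sqrt h • σ x v m - e)
      - 2 * φ (x - e) + φ (x + h • b x v - Real.sqrt h • σ x v m - e)) -
      B0 * (∫ z, (φ (x + η x v z - e) - φ (x - e)) ∂ν) + C0 * φ (x - e) - D0) * ρ e =
      -A * ∑ m : Fin d, (φ (x + h • b x v + Real.sqrt h • σ x v m - e) * ρ e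
      - 2 * (φ (x - e) * ρ e) + φ (x + h • b x v - Real.sqrt h • σ x v m - e) * ρ e) -
      B0 * ((∫ z, (φ (x + η x v z - e) - φ (x - e)) ∂ν) * ρ e) + C0 * (φ (x - e) * ρ e)
      - D0 * ρ e := by
    intro e
    have : ∀ m : Fin d, φ (x + h • b x v + Real.sqrt h • σ x v m - e) * ρ e
      - 2 * (φ (x - e) * ρ e) + φ (x + h • b x v - Real.sqrt h • σ x v m - e) * ρ e =
      (φ (x + h • b x v + Real.sqrt h • σ x v m - e)
      - 2 * φ (x - e) + φ (x + h • b x v - Real.sqrt h • σ x v m - e)) * ρ e := fun m => by ring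
    simp_rw [this]
    rw [← Finset.sum_mul]
    ring
  simp_rw [hfun]
  rw [integral_comb4 _ _ _ _ hs hI (hint x) hρint,
    integral_finsetSum _ (fun m _ => hm m), hρ1, hν, mul_one]
  congr 4
  refine Finset.sum_congr rfl fun m _ => ?_
  have := integral_comb4 1 2 1 0 (hint (x + h • b x v + Real.sqrt h • σ x v m)) (hint x)
    (hint (x + h • b x v - Real.sqrt h • σ x v m)) hρint
  simp only [one_mul, zero_mul, sub_zero] at this
  exact this.symm

/-- Convexity (condition (C4) with `C = 0`) of the semi-discrete scheme: averaging the
scheme over translations by a mollifier dominates the scheme applied to the mollified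
function. -/
theorem schemeS_convexity
    (N M d : ℕ) (hN : 0 < N) (hM : 0 < M) (hd : 0 < d)
    (V : Type*) [MetricSpace V] [CompactSpace V] [Nonempty V]
    (σ : Euc N → V → Fin d → Euc N) (b : Euc N → V → Euc N)
    (c f : Euc N → V → ℝ) (η : Euc N → V → Euc M → Euc N)
    (hσ : ∀ m : Fin d, Continuous fun p : Euc N × V => σ p.1 p.2 m)
    (hb : Continuous fun p : Euc N × V => b p.1 p.2)
    (hc : Continuous fun p : Euc N × V => c p.1 p.2)
    (hf : Continuous fun p : Euc N × V => f p.1 p.2)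
    (hηxv : ∀ z, Continuous fun p : Euc N × V => η p.1 p.2 z)
    (hηz : ∀ x v, Measurable (η x v))
    (Cb : ℝ) (hσbd : ∀ x v (m : Fin d), ‖σ x v m‖ ≤ Cb) (hbbd : ∀ x v, ‖b x v‖ ≤ Cb)
    (hcbd : ∀ x v, |c x v| ≤ Cb) (hfbd : ∀ x v, |f x v| ≤ Cb)
    (hηbd : ∀ x v z, ‖η x v z‖ ≤ Cb)
    (ν : Measure (Euc M)) [IsFiniteMeasure ν] (hν0 : ν {0} = 0)
    (hlampos : 0 < (ν Set.univ).toReal)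
    (h : ℝ) (hh : 0 < h) (x : Euc N)
    (φ : Euc N → ℝ) (Bφ Lφ : ℝ) (hφb : ∀ y, |φ y| ≤ Bφ)
    (hφlip : LipschitzWith (Real.toNNReal Lφ) φ)
    (ρ : Euc N → ℝ) (hρ0 : ∀ e, 0 ≤ ρ e) (hρint : Integrable ρ volume)
    (hρ1 : (∫ e, ρ e) = 1) :
    (∫ e, schemeS σ b c f η ν h x (φ (x - e)) (fun y => φ (y - e)) * ρ e) ≥
      schemeS σ b c f η ν h x (∫ e, φ (x - e) * ρ e)
        (fun y => ∫ e, φ (y - e) * ρ e) := by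
  obtain ⟨K, hK, hdiff⟩ := schemeG_diff σ b c f η hηz Cb hcbd ν h hh x
  have hφc := hφlip.continuous
  have hB : 0 ≤ Bφ := (abs_nonneg _).trans (hφb 0)
  have hCb : 0 ≤ Cb := (abs_nonneg _).trans (hcbd x (Classical.arbitrary V))
  set G : Euc N → V → ℝ :=
    fun e v => schemeG σ b c f η ν h x (φ (x - e)) (fun y => φ (y - e)) v with hG
  have hS : ∀ e, schemeS σ b c f η ν h x (φ (x - e)) (fun y => φ (y - e)) = ⨆ v, G e v :=
    fun e => rfl
  have hshift : ∀ e, Continuous fun y => φ (y - e) := fun e => by fun_prop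
  have hGb : ∀ e v, |G e v| ≤ K * Bφ + Real.exp (h * Cb) * Cb := by
    intro e v
    have h1 := hdiff v (φ (x - e)) 0 Bφ Bφ (fun y => φ (y - e)) (fun _ => 0) (hshift e)
      continuous_const (fun y => hφb _) (fun y => by simpa using hB) (by simpa using hφb _)
      (fun y => by simpa using hφb _)
    have h2 : |schemeG σ b c f η ν h x 0 (fun _ => 0) v| ≤ Real.exp (h * Cb) * Cb := by
      have : schemeG σ b c f η ν h x 0 (fun _ => 0) v = -(Real.exp (h * c x v) * f x v) := by
        simp [schemeG]
      rw [this, abs_neg, abs_mul, Real.abs_exp]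
      gcongr
      · exact (abs_le.1 (hcbd x v)).2
      · exact hfbd x v
    have h3 := abs_sub_abs_le_abs_sub (G e v) (schemeG σ b c f η ν h x 0 (fun _ => 0) v)
    change |G e v - _| ≤ _ at h1
    linarith
  have hbdd : ∀ e, BddAbove (Set.range (G e)) := by
    intro e
    refine ⟨K * Bφ + Real.exp (h * Cb) * Cb, ?_⟩
    rintro _ ⟨v, rfl⟩
    exact (abs_le.1 (hGb e v)).2
  have hGlip : ∀ e e' v, G e v ≤ G e' v + K * (Real.toNNReal Lφ * dist e e') := by
    intro e e' v
    have hl : ∀ y, |φ (y - e) - φ (y - e')| ≤ Real.toNNReal Lφ * dist e e' := fun y => by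
      have := hφlip.dist_le_mul (y - e) (y - e')
      rwa [dist_sub_left, Real.dist_eq] at this
    have := hdiff v (φ (x - e)) (φ (x - e')) _ Bφ (fun y => φ (y - e)) (fun y => φ (y - e'))
      (hshift e) (hshift e') (fun y => hφb _) (fun y => hφb _) (hl x) hl
    have := (abs_le.1 this).2
    change G e v - G e' v ≤ _ at this
    linarith
  have hScont : Continuous fun e => ⨆ v, G e v := by
    refine (LipschitzWith.of_le_add_mul (Real.toNNReal K * Real.toNNReal Lφ) ?_).continuous
    intro e e'
    refine ciSup_le fun v => (hGlip e e' v).trans ?_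
    rw [NNReal.coe_mul, Real.coe_toNNReal K hK, mul_assoc]
    have := le_ciSup (hbdd e') v
    linarith
  have hSint : Integrable (fun e => (⨆ v, G e v) * ρ e) volume := by
    refine hρint.bdd_mul (c := K * Bφ + Real.exp (h * Cb) * Cb)
      hScont.aestronglyMeasurable (Filter.Eventually.of_forall fun e => ?_)
    rw [Real.norm_eq_abs, abs_le]
    constructor
    · have v := Classical.arbitrary V
      exact (abs_le.1 (hGb e v)).1.trans (le_ciSup (hbdd e) v)
    · exact ciSup_le fun v => (abs_le.1 (hGb e v)).2
  have hGint : ∀ v, Integrable (fun e => G e v * ρ e) volume := by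
    intro v
    have hc : Continuous fun e => G e v := by
      refine (LipschitzWith.of_le_add_mul (Real.toNNReal K * Real.toNNReal Lφ) ?_).continuous
      intro e e'
      rw [NNReal.coe_mul, Real.coe_toNNReal K hK, mul_assoc]
      exact hGlip e e' v
    exact hρint.bdd_mul (c := K * Bφ + Real.exp (h * Cb) * Cb)
      hc.aestronglyMeasurable (Filter.Eventually.of_forall fun e => hGb e v)
  simp_rw [hS]
  refine ge_iff_le.2 (ciSup_le fun v => ?_)
  refine (schemeG_avg σ b c f η hηz ν h x v φ Bφ hφb hφc ρ hρint hρ1).le.trans ?_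
  refine integral_mono (hGint v) hSint fun e => ?_
  exact mul_le_mul_of_nonneg_right (le_ciSup (hbdd e) v) (hρ0 e)

end
end

section
/- Monotonicity (condition (C1)) of the semi-discrete scheme: assume c(x,v) ≥ c₀ > 0 for all x, v. Then for every h > 0, x ∈ ℝ^N, ζ ∈ ℝ, τ > 0, and all bounded Borel functions u, v : ℝ^N → ℝ with u ≤ v pointwise, one has S(h, x, ζ + τ, u + τ) ≥ S(h, x, ζ, v) + c₀ τ. -/
open MeasureTheory

noncomputable section

/-- Monotonicity (condition (C1)) of the semi-discrete scheme: if `u ≤ v` are bounded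
Borel functions, `τ > 0` and `c ≥ c₀ > 0`, then
`S(h, x, ζ + τ, u + τ) ≥ S(h, x, ζ, v) + c₀ τ`. -/
theorem schemeS_monotonicity
    (N M d : ℕ) (hN : 0 < N) (hM : 0 < M) (hd : 0 < d)
    (V : Type*) [MetricSpace V] [CompactSpace V] [Nonempty V]
    (σ : Euc N → V → Fin d → Euc N) (b : Euc N → V → Euc N)
    (c f : Euc N → V → ℝ) (η : Euc N → V → Euc M → Euc N)
    (hσ : ∀ m : Fin d, Continuous fun p : Euc N × V => σ p.1 p.2 m)
    (hb : Continuous fun p : Euc N × V => b p.1 p.2)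
    (hc : Continuous fun p : Euc N × V => c p.1 p.2)
    (hf : Continuous fun p : Euc N × V => f p.1 p.2)
    (hηxv : ∀ z, Continuous fun p : Euc N × V => η p.1 p.2 z)
    (hηz : ∀ x v, Measurable (η x v))
    (Cb : ℝ) (hσbd : ∀ x v (m : Fin d), ‖σ x v m‖ ≤ Cb) (hbbd : ∀ x v, ‖b x v‖ ≤ Cb)
    (hcbd : ∀ x v, |c x v| ≤ Cb) (hfbd : ∀ x v, |f x v| ≤ Cb)
    (hηbd : ∀ x v z, ‖η x v z‖ ≤ Cb)
    (ν : Measure (Euc M)) [IsFiniteMeasure ν] (hν0 : ν {0} = 0)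
    (hlampos : 0 < (ν Set.univ).toReal)
    (c₀ : ℝ) (hc₀ : 0 < c₀) (hcge : ∀ x v, c₀ ≤ c x v)
    (h : ℝ) (hh : 0 < h) (x : Euc N) (ζ τ : ℝ) (hτ : 0 < τ)
    (u v : Euc N → ℝ) (hum : Measurable u) (hvm : Measurable v)
    (Cu : ℝ) (hub : ∀ y, |u y| ≤ Cu) (hvb : ∀ y, |v y| ≤ Cu)
    (huv : ∀ y, u y ≤ v y) :
    schemeS σ b c f η ν h x (ζ + τ) (fun y => u y + τ) ≥
      schemeS σ b c f η ν h x ζ v + c₀ * τ := by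
  unfold schemeS
  set L : ℝ := (ν Set.univ).toReal with hL
  have hA : 0 ≤ Real.exp (-(h * L)) / (2 * (d : ℝ) * h) := by positivity
  have hB : 0 ≤ (1 - Real.exp (-(h * L))) / (h * L) := by
    apply div_nonneg
    · have : Real.exp (-(h * L)) ≤ 1 := Real.exp_le_one_iff.mpr (by nlinarith)
      linarith
    · positivity
  generalize Real.exp (-(h * L)) / (2 * (d : ℝ) * h) = A at hA ⊢
  generalize (1 - Real.exp (-(h * L))) / (h * L) = B at hB ⊢
  have hint : ∀ (g : Euc N → ℝ), Measurable g → (∀ y, |g y| ≤ Cu) → ∀ (w : V) (r : ℝ),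
      Integrable (fun z => g (x + η x w z) - r) ν := by
    intro g hg hgb w r
    refine Integrable.sub ?_ (integrable_const r)
    refine Integrable.of_bound (C := Cu) ?_ ?_
    · exact (hg.comp (measurable_const.add (hηz x w))).aestronglyMeasurable
    · exact Filter.Eventually.of_forall fun z => hgb _
  have hsimp : ∀ y : Euc N, u y + τ - (ζ + τ) = u y - ζ := fun y => by ring
  have hsimp2 : ∀ y y' : Euc N, u y + τ - 2 * (ζ + τ) + (u y' + τ) = u y - 2 * ζ + u y' :=
    fun y y' => by ring
  simp only [hsimp, hsimp2]
  have hbdd : BddAbove (Set.range fun w : V =>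
      -A * ∑ m : Fin d, (u (x + h • b x w + Real.sqrt h • σ x w m) - 2 * ζ +
          u (x + h • b x w - Real.sqrt h • σ x w m)) -
      B * (∫ z, (u (x + η x w z) - ζ) ∂ν) +
      ((Real.exp (h * c x w) - 1) / h) * (ζ + τ) - Real.exp (h * c x w) * f x w) := by
    refine ⟨A * ((d : ℝ) * (2 * Cu + 2 * |ζ|)) + B * ((Cu + |ζ|) * L) +
      (Real.exp (h * Cb) / h) * |ζ + τ| + Real.exp (h * Cb) * Cb, ?_⟩
    rintro _ ⟨w, rfl⟩
    have h1 : -((d : ℝ) * (2 * Cu + 2 * |ζ|)) ≤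
        ∑ m : Fin d, (u (x + h • b x w + Real.sqrt h • σ x w m) - 2 * ζ +
          u (x + h • b x w - Real.sqrt h • σ x w m)) := by
      have := Finset.card_nsmul_le_sum (Finset.univ : Finset (Fin d))
        (fun m => u (x + h • b x w + Real.sqrt h • σ x w m) - 2 * ζ +
          u (x + h • b x w - Real.sqrt h • σ x w m)) (-(2 * Cu + 2 * |ζ|)) (by
          intro m _
          have a1 := (abs_le.mp (hub (x + h • b x w + Real.sqrt h • σ x w m))).1
          have a2 := (abs_le.mp (hub (x + h • b x w - Real.sqrt h • σ x w m))).1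
          have a3 := le_abs_self ζ
          linarith)
      simp only [Finset.card_univ, Fintype.card_fin, nsmul_eq_mul] at this
      linarith
    have h2 : -((Cu + |ζ|) * L) ≤ ∫ z, (u (x + η x w z) - ζ) ∂ν := by
      have h3 : ‖∫ z, (u (x + η x w z) - ζ) ∂ν‖ ≤ (Cu + |ζ|) * ν.real Set.univ :=
        norm_integral_le_of_norm_le_const (Filter.Eventually.of_forall fun z => by
          rw [Real.norm_eq_abs]
          exact (abs_sub _ _).trans (add_le_add (hub _) le_rfl))
      rw [Real.norm_eq_abs] at h3
      exact (abs_le.mp h3).1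
    have h1' := mul_le_mul_of_nonneg_left h1 hA
    have h2' := mul_le_mul_of_nonneg_left h2 hB
    have hcw := hcge x w
    have he : Real.exp (h * c x w) ≤ Real.exp (h * Cb) :=
      Real.exp_le_exp.mpr (mul_le_mul_of_nonneg_left (abs_le.mp (hcbd x w)).2 hh.le)
    have he1 : 1 ≤ Real.exp (h * c x w) := Real.one_le_exp (by nlinarith)
    have h4 : (Real.exp (h * c x w) - 1) / h * (ζ + τ) ≤ Real.exp (h * Cb) / h * |ζ + τ| := by
      calc _ ≤ (Real.exp (h * c x w) - 1) / h * |ζ + τ| :=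
            mul_le_mul_of_nonneg_left (le_abs_self _) (div_nonneg (by linarith) hh.le)
        _ ≤ _ := by
            apply mul_le_mul_of_nonneg_right _ (abs_nonneg _)
            apply div_le_div_of_nonneg_right _ hh.le
            linarith
    have h5 : -(Real.exp (h * c x w) * f x w) ≤ Real.exp (h * Cb) * Cb := by
      have hCb : 0 ≤ Cb := (abs_nonneg _).trans (hfbd x w)
      calc -(Real.exp (h * c x w) * f x w) = Real.exp (h * c x w) * (-f x w) := by ring
        _ ≤ Real.exp (h * c x w) * Cb :=
            mul_le_mul_of_nonneg_left (by linarith [(abs_le.mp (hfbd x w)).1]) (by positivity)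
        _ ≤ _ := mul_le_mul_of_nonneg_right he hCb
    simp only
    linarith
  rw [ge_iff_le, ← le_sub_iff_add_le]
  apply ciSup_le
  intro w
  rw [le_sub_iff_add_le]
  refine le_trans ?_ (le_ciSup hbdd w)
  have h1 : ∑ m : Fin d, (u (x + h • b x w + Real.sqrt h • σ x w m) - 2 * ζ +
          u (x + h • b x w - Real.sqrt h • σ x w m)) ≤
      ∑ m : Fin d, (v (x + h • b x w + Real.sqrt h • σ x w m) - 2 * ζ +
          v (x + h • b x w - Real.sqrt h • σ x w m)) :=
    Finset.sum_le_sum fun m _ => add_le_add (sub_le_sub_right (huv _) _) (huv _)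
  have h2 : (∫ z, (u (x + η x w z) - ζ) ∂ν) ≤ ∫ z, (v (x + η x w z) - ζ) ∂ν :=
    integral_mono (hint u hum hub w ζ) (hint v hvm hvb w ζ)
      fun z => sub_le_sub_right (huv _) _
  have h1' := mul_le_mul_of_nonneg_left h1 hA
  have h2' := mul_le_mul_of_nonneg_left h2 hB
  have h3 : c₀ ≤ (Real.exp (h * c x w) - 1) / h := by
    rw [le_div_iff₀ hh]
    have := Real.add_one_le_exp (h * c x w)
    have := mul_le_mul_of_nonneg_left (hcge x w) hh.le
    linarith
  have h3' := mul_le_mul_of_nonneg_right h3 hτ.le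
  linarith


end
end
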